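/- Let m, n be positive integers, ε = 1 or −1, and let w be a real-analytic solution of x^m w_yy + ε y^n w_xx = 0 on a square |x| < R, |y| < R, with expansion w(x,y) = Σ_{j=0}^∞ α_j(x) y^j. Write the power series α_0(x) = Σ_j a_j x^j. Then a_j = 0 for every index j which is not of the form q(m+2) or q(m+2)+1 with q a nonnegative integer; equivalently, there exist real-analytic functions h^1 and h^2 of one variable such that α_0(x) = h^1(x^{m+2}) + x h^2(x^{m+2}) on (−R,R). -/

import Mathlib

noncomputable section

/-- Dot product of two 3-vectors (ℂ-bilinear extension when over ℂ). -/
def dot3 {R : Type*} [CommRing R] (v w : Fin 3 → R) : R :=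
  v 0 * w 0 + v 1 * w 1 + v 2 * w 2

/-- Cross product of two 3-vectors (ℂ-bilinear extension when over ℂ). -/
def cross3 {R : Type*} [CommRing R] (v w : Fin 3 → R) : Fin 3 → R :=
  ![v 1 * w 2 - v 2 * w 1, v 2 * w 0 - v 0 * w 2, v 0 * w 1 - v 1 * w 0]

/-- Euclidean norm of a real 3-vector. -/
def enorm3 (v : Fin 3 → ℝ) : ℝ := Real.sqrt (dot3 v v)

/-- Partial derivative with respect to the first variable `s`. -/
def pds {E : Type*} [NormedAddCommGroup E] [NormedSpace ℝ E]
    (f : ℝ × ℝ → E) (p : ℝ × ℝ) : E :=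
  deriv (fun s => f (s, p.2)) p.1

/-- Partial derivative with respect to the second variable `t`. -/
def pdt {E : Type*} [NormedAddCommGroup E] [NormedSpace ℝ E]
    (f : ℝ × ℝ → E) (p : ℝ × ℝ) : E :=
  deriv (fun t => f (p.1, t)) p.2

/-- Componentwise `s`-derivative of a 3-vector valued map. -/
def vds (V : ℝ × ℝ → Fin 3 → ℝ) (p : ℝ × ℝ) : Fin 3 → ℝ := fun i => pds (fun q => V q i) p

/-- Componentwise `t`-derivative of a 3-vector valued map. -/
def vdt (V : ℝ × ℝ → Fin 3 → ℝ) (p : ℝ × ℝ) : Fin 3 → ℝ := fun i => pdt (fun q => V q i) p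

lemma aux_fps (c : ℕ → ℝ) (f : ℝ → ℝ) (R : ℝ) (hR : 0 < R)
    (h : ∀ y : ℝ, |y| < R → HasSum (fun j => c j * y ^ j) (f y)) :
    HasFPowerSeriesOnBall f (FormalMultilinearSeries.ofScalars ℝ c) 0 (ENNReal.ofReal R) where
  r_le := by
    refine ENNReal.le_of_forall_nnreal_lt fun r hr => ?_
    have hr' : (r : ℝ) < R := by
      rw [← ENNReal.ofReal_coe_nnreal] at hr
      exact (ENNReal.ofReal_lt_ofReal_iff hR).1 hr
    have h0 := (h r (by rwa [NNReal.abs_eq])).summable.tendsto_atTop_zero.norm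
    apply FormalMultilinearSeries.le_radius_of_tendsto (l := ‖(0 : ℝ)‖)
    refine h0.congr fun n => ?_
    rw [FormalMultilinearSeries.ofScalars_norm, norm_mul, norm_pow]
    simp
  r_pos := by simpa using hR
  hasSum := by
    intro y hy
    have hy' : |y| < R := by
      rw [Metric.eball_ofReal] at hy
      simpa using hy
    simpa [FormalMultilinearSeries.ofScalars_apply_eq, mul_comm] using h y hy'

lemma aux_coef (c : ℕ → ℝ) (f : ℝ → ℝ) (R : ℝ) (hR : 0 < R)
    (h : ∀ y : ℝ, |y| < R → HasSum (fun j => c j * y ^ j) (f y)) (k : ℕ) :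
    iteratedDeriv k f 0 = k.factorial * c k := by
  have h1 := (aux_fps c f R hR h).hasFPowerSeriesAt
  have h2 := h1.analyticAt.hasFPowerSeriesAt
  have h3 := congrFun (FormalMultilinearSeries.ofScalars_series_injective ℝ ℝ
    (h1.eq_formalMultilinearSeries h2)) k
  have : (k.factorial : ℝ) ≠ 0 := by positivity
  rw [h3]; field_simp

lemma aux_pow_mul (n j : ℕ) (v : ℝ → ℝ) (hv : AnalyticAt ℝ v 0) :
    iteratedDeriv j (fun y => y ^ n * v y) 0 =
      if j < n then 0 else j.choose n * n.factorial * iteratedDeriv (j - n) v 0 := by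
  rw [iteratedDeriv_fun_mul (by fun_prop) hv.contDiffAt]
  simp only [iteratedDeriv_fun_pow_zero]
  split_ifs with h
  · refine Finset.sum_eq_zero fun i hi => ?_
    have : i ≠ n := by simp at hi; omega
    simp [this]
  · rw [Finset.sum_eq_single n]
    · simp
    · intro i _ hi; simp [hi]
    · intro hh; simp at hh; omega

lemma aux_pds_eq {f : ℝ × ℝ → ℝ} {p : ℝ × ℝ} (hf : DifferentiableAt ℝ f p) :
    pds f p = fderiv ℝ f p (1, 0) := by
  have h : HasDerivAt (fun s : ℝ => (s, p.2)) ((1 : ℝ), (0 : ℝ)) p.1 :=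
    (hasDerivAt_id p.1).prodMk (hasDerivAt_const _ _)
  exact (HasFDerivAt.comp_hasDerivAt (f := fun s : ℝ => (s, p.2)) p.1 hf.hasFDerivAt h).deriv

lemma aux_pdt_eq {f : ℝ × ℝ → ℝ} {p : ℝ × ℝ} (hf : DifferentiableAt ℝ f p) :
    pdt f p = fderiv ℝ f p (0, 1) := by
  have h : HasDerivAt (fun s : ℝ => (p.1, s)) ((0 : ℝ), (1 : ℝ)) p.2 :=
    (hasDerivAt_const _ _).prodMk (hasDerivAt_id p.2)
  exact (HasFDerivAt.comp_hasDerivAt (f := fun s : ℝ => (p.1, s)) p.2 hf.hasFDerivAt h).deriv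

lemma aux_fd_an {U : Set (ℝ × ℝ)} {f : ℝ × ℝ → ℝ} (hf : AnalyticOnNhd ℝ f U) (v : ℝ × ℝ) :
    AnalyticOnNhd ℝ (fun p => fderiv ℝ f p v) U := fun p hp =>
  ((ContinuousLinearMap.apply ℝ ℝ v).analyticAt _).comp (hf.fderiv p hp)

lemma aux_pds_an {U : Set (ℝ × ℝ)} (hU : IsOpen U) {f : ℝ × ℝ → ℝ}
    (hf : AnalyticOnNhd ℝ f U) : AnalyticOnNhd ℝ (pds f) U :=
  (aux_fd_an hf (1, 0)).congr hU fun p hp => (aux_pds_eq (hf p hp).differentiableAt).symm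

lemma aux_pdt_an {U : Set (ℝ × ℝ)} (hU : IsOpen U) {f : ℝ × ℝ → ℝ}
    (hf : AnalyticOnNhd ℝ f U) : AnalyticOnNhd ℝ (pdt f) U :=
  (aux_fd_an hf (0, 1)).congr hU fun p hp => (aux_pdt_eq (hf p hp).differentiableAt).symm

lemma aux_fd_congr {U : Set (ℝ × ℝ)} (hU : IsOpen U) {f g : ℝ × ℝ → ℝ}
    (h : Set.EqOn f g U) {p : ℝ × ℝ} (hp : p ∈ U) : fderiv ℝ f p = fderiv ℝ g p :=
  (h.eventuallyEq_of_mem (hU.mem_nhds hp)).fderiv_eq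

lemma aux_comm {U : Set (ℝ × ℝ)} (hU : IsOpen U) {f : ℝ × ℝ → ℝ}
    (hf : AnalyticOnNhd ℝ f U) : Set.EqOn (pds (pdt f)) (pdt (pds f)) U := by
  intro p hp
  have hd : DifferentiableAt ℝ (fderiv ℝ f) p := (hf.fderiv p hp).differentiableAt
  rw [aux_pds_eq (aux_pdt_an hU hf p hp).differentiableAt,
    aux_pdt_eq (aux_pds_an hU hf p hp).differentiableAt,
    aux_fd_congr hU (g := fun q => fderiv ℝ f q (0, 1))
      (fun q hq => aux_pdt_eq (hf q hq).differentiableAt) hp,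
    aux_fd_congr hU (g := fun q => fderiv ℝ f q (1, 0))
      (fun q hq => aux_pds_eq (hf q hq).differentiableAt) hp,
    fderiv_clm_apply hd (by fun_prop), fderiv_clm_apply hd (by fun_prop)]
  have := ((hf p hp).contDiffAt (n := 2)).isSymmSndFDerivAt (by simp)
  simpa using this (1, 0) (0, 1)

lemma aux_pds_congr {U : Set (ℝ × ℝ)} (hU : IsOpen U) {f g : ℝ × ℝ → ℝ}
    (h : Set.EqOn f g U) : Set.EqOn (pds f) (pds g) U := by
  intro p hp
  have hc : Filter.Tendsto (fun s : ℝ => (s, p.2)) (nhds p.1) (nhds p) :=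
    (Continuous.prodMk_left p.2).tendsto p.1
  exact (Filter.EventuallyEq.deriv_eq (hc.eventually (h.eventuallyEq_of_mem (hU.mem_nhds hp))))

lemma aux_pdt_congr {U : Set (ℝ × ℝ)} (hU : IsOpen U) {f g : ℝ × ℝ → ℝ}
    (h : Set.EqOn f g U) : Set.EqOn (pdt f) (pdt g) U := by
  intro p hp
  have hc : Filter.Tendsto (fun s : ℝ => (p.1, s)) (nhds p.2) (nhds p) :=
    (Continuous.prodMk_right p.1).tendsto p.2
  exact (Filter.EventuallyEq.deriv_eq (hc.eventually (h.eventuallyEq_of_mem (hU.mem_nhds hp))))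

lemma aux_pdt_iter_an {U : Set (ℝ × ℝ)} (hU : IsOpen U) {f : ℝ × ℝ → ℝ}
    (hf : AnalyticOnNhd ℝ f U) (k : ℕ) : AnalyticOnNhd ℝ (pdt^[k] f) U := by
  induction k with
  | zero => exact hf
  | succ k ih => rw [Function.iterate_succ_apply']; exact aux_pdt_an hU ih

lemma aux_comm_iter {U : Set (ℝ × ℝ)} (hU : IsOpen U) {f : ℝ × ℝ → ℝ}
    (hf : AnalyticOnNhd ℝ f U) (k : ℕ) :
    Set.EqOn (pds (pdt^[k] f)) (pdt^[k] (pds f)) U := by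
  induction k with
  | zero => exact fun _ _ => rfl
  | succ k ih =>
    rw [Function.iterate_succ_apply', Function.iterate_succ_apply']
    exact (aux_comm hU (aux_pdt_iter_an hU hf k)).trans (aux_pdt_congr hU ih)

lemma aux_comm_iter2 {U : Set (ℝ × ℝ)} (hU : IsOpen U) {f : ℝ × ℝ → ℝ}
    (hf : AnalyticOnNhd ℝ f U) (k : ℕ) :
    Set.EqOn (pds (pds (pdt^[k] f))) (pdt^[k] (pds (pds f))) U :=
  (aux_pds_congr hU (aux_comm_iter hU hf k)).trans (aux_comm_iter hU (aux_pds_an hU hf) k)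

lemma aux_iter_eq (f : ℝ × ℝ → ℝ) (k : ℕ) (x y : ℝ) :
    pdt^[k] f (x, y) = iteratedDeriv k (fun t => f (x, t)) y := by
  induction k generalizing y with
  | zero => simp
  | succ k ih =>
    rw [Function.iterate_succ_apply', iteratedDeriv_succ]
    simp only [pdt]
    congr 1
    funext t
    exact ih t

/-- The recursion for the coefficient functions. -/
lemma aux_rec
    (m n : ℕ) (ε : ℝ) (hε : ε = 1 ∨ ε = -1)
    (R : ℝ) (hR : 0 < R)
    (w : ℝ × ℝ → ℝ)
    (hw : AnalyticOnNhd ℝ w (Set.Ioo (-R) R ×ˢ Set.Ioo (-R) R))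
    (hsol : ∀ p : ℝ × ℝ, |p.1| < R → |p.2| < R →
      p.1 ^ m * pdt (pdt w) p + ε * p.2 ^ n * pds (pds w) p = 0)
    (α : ℕ → ℝ → ℝ)
    (hexp : ∀ x y : ℝ, |x| < R → |y| < R → HasSum (fun j => α j x * y ^ j) (w (x, y)))
    (k : ℕ) : ∃ c : ℝ, ∀ x : ℝ, |x| < R →
      deriv (deriv (α k)) x = c * (x ^ m * α (k + n + 2) x) := by
  have hU : IsOpen (Set.Ioo (-R) R ×ˢ Set.Ioo (-R) R) := isOpen_Ioo.prod isOpen_Ioo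
  have hco : ∀ (x : ℝ), |x| < R → ∀ j, iteratedDeriv j (fun t => w (x, t)) 0
      = j.factorial * α j x := fun x hx j =>
    aux_coef (fun j => α j x) (fun t => w (x, t)) R hR (fun y hy => hexp x y hx hy) j
  have hε2 : ε * ε = 1 := by rcases hε with h | h <;> simp [h]
  have hC : ((k + n).choose n * n.factorial : ℝ) ≠ 0 := by
    have := Nat.choose_pos (Nat.le_add_left n k)
    positivity
  have hk : (k.factorial : ℝ) ≠ 0 := by positivity
  refine ⟨-ε * (k + n + 2).factorial / (((k + n).choose n * n.factorial) * k.factorial), ?_⟩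
  intro x hx
  -- second x-derivative
  have hdd : iteratedDeriv k (fun t => pds (pds w) (x, t)) 0
      = k.factorial * deriv (deriv (α k)) x := by
    rw [← aux_iter_eq, ← aux_comm_iter2 hU hw k ⟨abs_lt.1 hx, by simpa using hR⟩]
    have e1 : Set.EqOn (fun s => pdt^[k] w (s, 0)) (fun s => k.factorial * α k s)
        (Set.Ioo (-R) R) := fun s hs => by
      simp only [aux_iter_eq]; exact hco s (abs_lt.2 hs) k
    have e2 := e1.iteratedDeriv_of_isOpen isOpen_Ioo 2 (abs_lt.1 hx)
    rw [iteratedDeriv_const_mul_field] at e2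
    simpa [iteratedDeriv_succ, pds] using e2
  have hvan : AnalyticAt ℝ (fun t => pds (pds w) (x, t)) 0 :=
    AnalyticAt.comp (f := fun t : ℝ => (x, t)) (aux_pds_an hU (aux_pds_an hU hw) (x, 0)
      ⟨abs_lt.1 hx, by simpa using hR⟩) (by fun_prop)
  have heq : Set.EqOn (fun y => x ^ m * iteratedDeriv 2 (fun t => w (x, t)) y)
      (fun y => (-ε) * (y ^ n * pds (pds w) (x, y))) (Set.Ioo (-R) R) := by
    intro y hy
    have h := hsol (x, y) hx (abs_lt.2 hy)
    have h2 : pdt (pdt w) (x, y) = iteratedDeriv 2 (fun t => w (x, t)) y :=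
      aux_iter_eq w 2 x y
    rw [h2] at h
    simp only at h ⊢
    linarith
  have h3 := heq.iteratedDeriv_of_isOpen isOpen_Ioo (k + n) (x := 0) (by simpa using hR)
  rw [iteratedDeriv_const_mul_field, iteratedDeriv_const_mul_field, aux_pow_mul _ _ _ hvan,
    if_neg (by omega), Nat.add_sub_cancel, hdd] at h3
  have h4 : iteratedDeriv (k + n) (iteratedDeriv 2 (fun t => w (x, t))) 0
      = iteratedDeriv (k + n + 2) (fun t => w (x, t)) 0 := by
    simp only [iteratedDeriv_eq_iterate, Function.iterate_add_apply]
  rw [h4, hco x hx] at h3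
  rw [div_mul_eq_mul_div, eq_div_iff (mul_ne_zero hC hk)]
  linear_combination ε * h3 - (↑((k + n).choose n) * ↑n.factorial * ↑k.factorial * deriv (deriv (α k)) x) * hε2

lemma aux_vanish (m n : ℕ) (R : ℝ) (hR : 0 < R) (α : ℕ → ℝ → ℝ)
    (hα : ∀ j, AnalyticOnNhd ℝ (α j) (Set.Ioo (-R) R))
    (hrec : ∀ k, ∃ c : ℝ, ∀ x : ℝ, |x| < R →
      deriv (deriv (α k)) x = c * (x ^ m * α (k + n + 2) x)) (j : ℕ) :
    ∀ k, j % (m + 2) ≠ 0 → j % (m + 2) ≠ 1 → iteratedDeriv j (α k) 0 = 0 := by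
  induction j using Nat.strong_induction_on with
  | _ j ih =>
    intro k h0 h1
    have hj0 : j ≠ 0 := by rintro rfl; simp at h0
    have hj1 : j ≠ 1 := by
      rintro rfl; exact h1 (Nat.mod_eq_of_lt (by omega))
    obtain ⟨i, rfl⟩ : ∃ i, j = i + 2 := ⟨j - 2, by omega⟩
    obtain ⟨c, hc⟩ := hrec k
    rw [iteratedDeriv_succ', iteratedDeriv_succ']
    have e : Set.EqOn (deriv (deriv (α k))) (fun x => c * (x ^ m * α (k + n + 2) x))
      (Set.Ioo (-R) R) := fun x hx => hc x (abs_lt.2 hx)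
    rw [e.iteratedDeriv_of_isOpen isOpen_Ioo i (by simpa using hR : (0 : ℝ) ∈ _),
      iteratedDeriv_const_mul_field, aux_pow_mul _ _ _ (hα _ 0 (by simpa using hR))]
    split_ifs with him
    · simp
    · have hmod : (i + 2) % (m + 2) = (i - m) % (m + 2) := by
        rw [← Nat.add_mod_right (i - m)]; congr 1; omega
      rw [ih (i - m) (by omega) _ (by rwa [← hmod]) (by rwa [← hmod])]
      simp

lemma aux_sub (M r : ℕ) (hM : 0 < M) (R : ℝ) (hR : 0 < R) (a : ℕ → ℝ)
    (ha : ∀ x : ℝ, |x| < R → Summable (fun j => a j * x ^ j)) (t : ℝ) (ht : |t| < R ^ M) :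
    Summable (fun q => a (q * M + r) * t ^ q) := by
  obtain ⟨s, hs0, hsR, hts⟩ : ∃ s : ℝ, 0 < s ∧ s < R ∧ |t| ≤ s ^ M := by
    have h1 : ((|t| : ℝ) ^ ((M : ℝ)⁻¹)) ^ M = |t| :=
      Real.rpow_inv_natCast_pow (abs_nonneg t) hM.ne'
    have h0 : 0 ≤ (|t| : ℝ) ^ ((M : ℝ)⁻¹) := by positivity
    set u := (|t| : ℝ) ^ ((M : ℝ)⁻¹)
    have h2 : u < R := by
      rw [← h1] at ht
      exact lt_of_pow_lt_pow_left₀ M hR.le ht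
    refine ⟨(u + R) / 2, by linarith, by linarith, ?_⟩
    rw [← h1]
    exact pow_le_pow_left₀ h0 (by linarith) M
  have hinj : Function.Injective (fun q : ℕ => q * M + r) := fun p q h => by
    simp only [Nat.add_right_cancel_iff] at h
    exact Nat.eq_of_mul_eq_mul_right hM h
  have hsum := ((ha s (by rwa [abs_of_pos hs0])).norm.comp_injective hinj).mul_left ((s ^ r)⁻¹)
  refine Summable.of_norm_bounded hsum fun q => ?_
  simp only [Function.comp, norm_mul, norm_pow, Real.norm_eq_abs, abs_of_pos hs0]
  have h5 : |t| ^ q ≤ (s ^ M) ^ q := pow_le_pow_left₀ (abs_nonneg t) hts q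
  calc |a (q * M + r)| * |t| ^ q ≤ |a (q * M + r)| * (s ^ M) ^ q := by gcongr
    _ = (s ^ r)⁻¹ * (|a (q * M + r)| * s ^ (q * M + r)) := by
      rw [pow_add, mul_comm q M, pow_mul]; field_simp

lemma aux_h (M r : ℕ) (hM : 0 < M) (R : ℝ) (hR : 0 < R) (a : ℕ → ℝ)
    (ha : ∀ x : ℝ, |x| < R → Summable (fun j => a j * x ^ j)) :
    ∃ h : ℝ → ℝ, AnalyticOnNhd ℝ h (Set.Ioo (-(R ^ M)) (R ^ M)) ∧
      ∀ t, |t| < R ^ M → HasSum (fun q => a (q * M + r) * t ^ q) (h t) := by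
  have hs : ∀ t, |t| < R ^ M → HasSum (fun q => a (q * M + r) * t ^ q)
      (∑' q, a (q * M + r) * t ^ q) := fun t ht => (aux_sub M r hM R hR a ha t ht).hasSum
  refine ⟨fun t => ∑' q, a (q * M + r) * t ^ q, ?_, hs⟩
  have := (aux_fps (fun q => a (q * M + r)) _ (R ^ M) (by positivity) hs).analyticOnNhd
  rwa [Metric.eball_ofReal, Real.ball_eq_Ioo, zero_sub, zero_add] at this

lemma aux_res (M r : ℕ) (hr : r < M) (x : ℝ) (a : ℕ → ℝ) (S : ℝ)
    (h : HasSum (fun q => a (q * M + r) * (x ^ M) ^ q) S) :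
    HasSum (fun j => if j % M = r then a j * x ^ j else 0) (x ^ r * S) := by
  have hM : 0 < M := by omega
  have hinj : Function.Injective (fun q : ℕ => q * M + r) := fun p q h => by
    simp only [Nat.add_right_cancel_iff] at h
    exact Nat.eq_of_mul_eq_mul_right hM h
  rw [← hinj.hasSum_iff]
  · have h' := h.mul_left (x ^ r)
    refine (congrArg (fun g => HasSum g (x ^ r * S)) (funext fun q => ?_)).mpr h'
    have : (q * M + r) % M = r := by
      rw [mul_comm, Nat.mul_add_mod, Nat.mod_eq_of_lt hr]
    simp only [Function.comp, this, if_true]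
    rw [pow_add, mul_comm q M, pow_mul]; ring
  · intro j hj
    rw [if_neg]
    intro hjr
    exact hj ⟨j / M, by simp only; rw [← hjr, mul_comm]; exact Nat.div_add_mod j M⟩

/-- structure of `α₀`.
For an analytic solution `w = Σ_j α_j(x) y^j` of `x^m w_yy + ε y^n w_xx = 0` on the square,
the Taylor coefficients `a_j` of `α₀` vanish unless `j ≡ 0` or `1 (mod m+2)`; equivalently
`α₀(x) = h¹(x^{m+2}) + x h²(x^{m+2})` for some real-analytic `h¹, h²`. -/
theorem alpha0_structure
    (m n : ℕ) (hm : 0 < m) (hn : 0 < n) (ε : ℝ) (hε : ε = 1 ∨ ε = -1)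
    (R : ℝ) (hR : 0 < R)
    (w : ℝ × ℝ → ℝ)
    (hw : AnalyticOnNhd ℝ w (Set.Ioo (-R) R ×ˢ Set.Ioo (-R) R))
    (hsol : ∀ p : ℝ × ℝ, |p.1| < R → |p.2| < R →
      p.1 ^ m * pdt (pdt w) p + ε * p.2 ^ n * pds (pds w) p = 0)
    (α : ℕ → ℝ → ℝ) (hα : ∀ j, AnalyticOnNhd ℝ (α j) (Set.Ioo (-R) R))
    (hexp : ∀ x y : ℝ, |x| < R → |y| < R → HasSum (fun j => α j x * y ^ j) (w (x, y)))
    (a : ℕ → ℝ) (ha : ∀ x : ℝ, |x| < R → HasSum (fun j => a j * x ^ j) (α 0 x)) :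
    (∀ j : ℕ, j % (m + 2) ≠ 0 → j % (m + 2) ≠ 1 → a j = 0) ∧
    (∃ h1 h2 : ℝ → ℝ,
      AnalyticOnNhd ℝ h1 (Set.Ioo (-(R ^ (m + 2))) (R ^ (m + 2))) ∧
      AnalyticOnNhd ℝ h2 (Set.Ioo (-(R ^ (m + 2))) (R ^ (m + 2))) ∧
      ∀ x : ℝ, |x| < R → α 0 x = h1 (x ^ (m + 2)) + x * h2 (x ^ (m + 2))) := by
  have hrec := aux_rec m n ε hε R hR w hw hsol α hexp
  have hz : ∀ j : ℕ, j % (m + 2) ≠ 0 → j % (m + 2) ≠ 1 → a j = 0 := by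
    intro j h0 h1
    have h := aux_vanish m n R hR α hα hrec j 0 h0 h1
    rw [aux_coef a (α 0) R hR ha j] at h
    have : (j.factorial : ℝ) ≠ 0 := by positivity
    exact (mul_eq_zero.1 h).resolve_left this
  refine ⟨hz, ?_⟩
  have hs : ∀ x : ℝ, |x| < R → Summable (fun j => a j * x ^ j) := fun x hx => (ha x hx).summable
  obtain ⟨h1, h1a, h1s⟩ := aux_h (m + 2) 0 (by omega) R hR a hs
  obtain ⟨h2, h2a, h2s⟩ := aux_h (m + 2) 1 (by omega) R hR a hs
  refine ⟨h1, h2, h1a, h2a, fun x hx => ?_⟩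
  have hxM : |x ^ (m + 2)| < R ^ (m + 2) := by
    rw [abs_pow]
    exact pow_lt_pow_left₀ hx (abs_nonneg x) (by omega)
  have e1 := aux_res (m + 2) 0 (by omega) x a _ (h1s _ hxM)
  have e2 := aux_res (m + 2) 1 (by omega) x a _ (h2s _ hxM)
  have e3 := e1.add e2
  rw [pow_zero, one_mul, pow_one] at e3
  have e4 : (fun j => a j * x ^ j) = fun j => (if j % (m + 2) = 0 then a j * x ^ j else 0) +
      (if j % (m + 2) = 1 then a j * x ^ j else 0) := by
    funext j
    by_cases c0 : j % (m + 2) = 0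
    · simp [c0]
    · by_cases c1 : j % (m + 2) = 1
      · simp [c1]
      · simp [c0, c1, hz j c0 c1]
  have e5 := ha x hx
  rw [e4] at e5
  exact e5.unique e3
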